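/- Let f : [0,∞) → ℝ be convex with f(1) = 0 and let G : [0,∞) → [0,∞) be increasing, convex, with G(0) = 0; assume (G,f) is information-subadditive. Let W be a channel from a finite set 𝒳 to a finite set 𝒴, let n ≥ 1, and let 𝓜 be a finite set with |𝓜| ≥ 2. Suppose a joint pmf on 𝓜 × 𝒳ⁿ × 𝒴ⁿ × 𝓜 factorizes as p(m, xⁿ, yⁿ, m̂) = p_M(m) · p_{Xⁿ|M}(xⁿ|m) · ∏_{i=1}^n W(y_i|x_i) · p_{M̂|Yⁿ}(m̂|yⁿ), where p_M is uniform on 𝓜, and let ε = Pr(M ≠ M̂). Then n · sup_{p_X} I_{G,f}(p_X, W) ≥ G( (1/|𝓜|)·f(|𝓜|(1−ε)) + ((|𝓜|−1)/|𝓜|)·f(|𝓜|ε/(|𝓜|−1)) ), where the supremum is over pmfs p_X on 𝒳. -/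

import Mathlib

open scoped BigOperators

/-- A probability mass function on a finite type: nonnegative and summing to 1. -/
def IsPMF {X : Type*} [Fintype X] (p : X → ℝ) : Prop :=
  (∀ x, 0 ≤ p x) ∧ ∑ x, p x = 1

/-- Absolute continuity `p ≪ q`: `q x = 0` implies `p x = 0`. -/
def AbsCont {X : Type*} (p q : X → ℝ) : Prop :=
  ∀ x, q x = 0 → p x = 0

/-- The f-divergence `D_f(p‖q) = ∑_{x : q(x) > 0} q(x) f(p(x)/q(x))`. -/
noncomputable def fDiv {X : Type*} [Fintype X] (f : ℝ → ℝ) (p q : X → ℝ) : ℝ :=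
  ∑ x, if 0 < q x then q x * f (p x / q x) else 0

/-- `D_m(f) = f 0 + lim_{t→∞} f t / t`, as an extended real.  For a convex `f`
with `f 1 = 0` the limit equals the supremum of the slopes `f t / (t-1)` over `t > 1`. -/
noncomputable def Dm (f : ℝ → ℝ) : EReal :=
  (f 0 : EReal) + ⨆ t : {t : ℝ // 1 < t}, ((f t.1 / (t.1 - 1) : ℝ) : EReal)

/-- An admissible pair `(G, f)`: `f` is convex on `[0,∞)` with `f 1 = 0`, and
`G : [0, D_m(f)) → [0,∞)` is non-decreasing with `G 0 = 0`. -/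
def Admissible (G f : ℝ → ℝ) : Prop :=
  ConvexOn ℝ (Set.Ici 0) f ∧ f 1 = 0 ∧ G 0 = 0 ∧
    (∀ a b : ℝ, 0 ≤ a → a ≤ b → (b : EReal) < Dm f → G a ≤ G b) ∧
    (∀ a : ℝ, 0 ≤ a → (a : EReal) < Dm f → 0 ≤ G a)

/-- The `(G,f)`-information `I_{G,f}(p_X, p_{Y|X})`: the infimum over output pmfs
`q_Y` (with `p_{Y|X=x} ≪ q_Y` for all `x`) of `∑_x p_X x • G (D_f(p_{Y|X=x}‖q_Y))`. -/
noncomputable def Igf {X Y : Type*} [Fintype X] [Fintype Y]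
    (G f : ℝ → ℝ) (pX : X → ℝ) (W : X → Y → ℝ) : ℝ :=
  sInf {v : ℝ | ∃ qY : Y → ℝ, IsPMF qY ∧ (∀ x, AbsCont (W x) qY) ∧
    v = ∑ x, pX x * G (fDiv f (W x) qY)}

/-- `(G,f)` is information-subadditive: for every pmf `p_X` and channels
`p_{Y|X}`, `p_{Z|X}` (so that `Y → X → Z` is a Markov chain),
`I_{G,f}(X;YZ) ≤ I_{G,f}(X;Y) + I_{G,f}(X;Z)`. -/
def InfoSubadditive (G f : ℝ → ℝ) : Prop :=
  ∀ (X Y Z : Type) [Fintype X] [Fintype Y] [Fintype Z]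
    (pX : X → ℝ) (W : X → Y → ℝ) (V : X → Z → ℝ),
    IsPMF pX → (∀ x, IsPMF (W x)) → (∀ x, IsPMF (V x)) →
    Igf G f pX (fun x (p : Y × Z) => W x p.1 * V x p.2) ≤
      Igf G f pX W + Igf G f pX V

lemma fDiv_eq_sum {X : Type*} [Fintype X] (f : ℝ → ℝ) (p q : X → ℝ) (hq : IsPMF q) :
    fDiv f p q = ∑ x, q x * f (p x / q x) := by
  unfold fDiv
  refine Finset.sum_congr rfl fun x _ => ?_
  split_ifs with h
  · rfl
  · have : q x = 0 := le_antisymm (not_lt.mp h) (hq.1 x)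
    simp [this]

lemma mul_div_of_absCont {X : Type*} {p q : X → ℝ} (h : AbsCont p q) (x : X) :
    q x * (p x / q x) = p x := by
  by_cases hx : q x = 0
  · simp [hx, h x hx]
  · field_simp

lemma jensen_scaled {ι : Type*} [Fintype ι] (f : ℝ → ℝ) (hf : ConvexOn ℝ (Set.Ici 0) f)
    (w a : ι → ℝ) (hw : ∀ i, 0 ≤ w i) (ha : ∀ i, 0 ≤ a i) (S : ℝ) (hS : 0 < S)
    (hsum : ∑ i, w i = S) :
    S * f ((∑ i, w i * a i) / S) ≤ ∑ i, w i * f (a i) := by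
  have h := hf.map_sum_le (t := Finset.univ) (w := fun i => w i / S) (p := a)
    (fun i _ => div_nonneg (hw i) hS.le)
    (by rw [← Finset.sum_div, hsum, div_self hS.ne']) (fun i _ => ha i)
  simp only [smul_eq_mul] at h
  have e1 : ∑ i, w i / S * a i = (∑ i, w i * a i) / S := by
    rw [Finset.sum_div]; exact Finset.sum_congr rfl fun i _ => by ring
  have e2 : ∑ i, w i / S * f (a i) = (∑ i, w i * f (a i)) / S := by
    rw [Finset.sum_div]; exact Finset.sum_congr rfl fun i _ => by ring
  rw [e1, e2, le_div_iff₀ hS] at h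
  linarith

lemma fDiv_nonneg {X : Type*} [Fintype X] (f : ℝ → ℝ) (hf : ConvexOn ℝ (Set.Ici 0) f)
    (hf1 : f 1 = 0) (p q : X → ℝ) (hp : IsPMF p) (hq : IsPMF q) (h : AbsCont p q) :
    0 ≤ fDiv f p q := by
  rw [fDiv_eq_sum f p q hq]
  have := jensen_scaled f hf q (fun x => p x / q x) hq.1
    (fun x => div_nonneg (hp.1 x) (hq.1 x)) 1 one_pos hq.2
  simp only [mul_div_of_absCont h, hp.2] at this
  simpa [hf1] using this

lemma exists_unif {Y : Type*} [Fintype Y] [Nonempty Y] :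
    ∃ q : Y → ℝ, IsPMF q ∧ ∀ p : Y → ℝ, AbsCont p q := by
  have hc : (0 : ℝ) < Fintype.card Y := by exact_mod_cast Fintype.card_pos
  refine ⟨fun _ => 1 / Fintype.card Y, ⟨fun _ => by positivity, ?_⟩, fun p y h => ?_⟩
  · simp
  · exact absurd h (by positivity)

lemma IsPMF.nonempty' {X : Type*} [Fintype X] {p : X → ℝ} (h : IsPMF p) : Nonempty X := by
  by_contra hne
  rw [not_nonempty_iff] at hne
  have := h.2
  simp at this

lemma Igf_bddBelow {X Y : Type*} [Fintype X] [Fintype Y] (G f : ℝ → ℝ)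
    (hf : ConvexOn ℝ (Set.Ici 0) f) (hf1 : f 1 = 0)
    (hGnonneg : ∀ x ∈ Set.Ici (0 : ℝ), 0 ≤ G x)
    (pX : X → ℝ) (hp : IsPMF pX) (W : X → Y → ℝ) (hW : ∀ x, IsPMF (W x)) :
    BddBelow {v : ℝ | ∃ qY : Y → ℝ, IsPMF qY ∧ (∀ x, AbsCont (W x) qY) ∧
      v = ∑ x, pX x * G (fDiv f (W x) qY)} := by
  refine ⟨0, ?_⟩
  rintro v ⟨q, hq, hac, rfl⟩
  exact Finset.sum_nonneg fun x _ => mul_nonneg (hp.1 x)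
    (hGnonneg _ (fDiv_nonneg f hf hf1 _ _ (hW x) hq (hac x)))

lemma isPMF_comp {X X' : Type*} [Fintype X] [Fintype X'] (e : X ≃ X') {p : X' → ℝ}
    (h : IsPMF p) : IsPMF (fun x => p (e x)) :=
  ⟨fun x => h.1 _, by rw [Equiv.sum_comp e p]; exact h.2⟩

lemma Igf_equiv {X Y X' Y' : Type*} [Fintype X] [Fintype Y] [Fintype X'] [Fintype Y']
    (G f : ℝ → ℝ) (eX : X ≃ X') (eY : Y ≃ Y') (pX : X' → ℝ) (W : X' → Y' → ℝ) :
    Igf G f (fun x => pX (eX x)) (fun x y => W (eX x) (eY y)) = Igf G f pX W := by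
  unfold Igf
  congr 1
  ext v
  constructor
  · rintro ⟨q, hq, hac, rfl⟩
    refine ⟨fun y => q (eY.symm y), isPMF_comp eY.symm hq, fun x y h => ?_, ?_⟩
    · have := hac (eX.symm x) (eY.symm y) h
      simpa using this
    · rw [← Equiv.sum_comp eX]
      refine Finset.sum_congr rfl fun x _ => ?_
      congr 2
      unfold fDiv
      rw [← Equiv.sum_comp eY]
      simp
  · rintro ⟨q, hq, hac, rfl⟩
    refine ⟨fun y => q (eY y), isPMF_comp eY hq, fun x y h => hac _ _ h, ?_⟩
    rw [← Equiv.sum_comp eX]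
    refine Finset.sum_congr rfl fun x _ => ?_
    congr 2
    unfold fDiv
    rw [← Equiv.sum_comp eY]

lemma sub_univ {G f : ℝ → ℝ} (hsub : InfoSubadditive G f)
    {X Y Z : Type*} [Fintype X] [Fintype Y] [Fintype Z]
    (pX : X → ℝ) (W : X → Y → ℝ) (V : X → Z → ℝ)
    (hp : IsPMF pX) (hW : ∀ x, IsPMF (W x)) (hV : ∀ x, IsPMF (V x)) :
    Igf G f pX (fun x (p : Y × Z) => W x p.1 * V x p.2) ≤
      Igf G f pX W + Igf G f pX V := by
  let eX := (Fintype.equivFin X).symm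
  let eY := (Fintype.equivFin Y).symm
  let eZ := (Fintype.equivFin Z).symm
  have h := hsub _ _ _ (fun x => pX (eX x)) (fun x y => W (eX x) (eY y))
    (fun x z => V (eX x) (eZ z)) (isPMF_comp eX hp) (fun x => isPMF_comp eY (hW _))
    (fun x => isPMF_comp eZ (hV _))
  rw [Igf_equiv G f eX eY, Igf_equiv G f eX eZ] at h
  rw [← Igf_equiv G f eX (Equiv.prodCongr eY eZ)]
  exact h

lemma isPMF_pi {Y : Type*} [Fintype Y] (n : ℕ) (V : Fin n → Y → ℝ) (hV : ∀ i, IsPMF (V i)) :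
    IsPMF (fun yn : Fin n → Y => ∏ i, V i (yn i)) := by
  classical
  refine ⟨fun yn => Finset.prod_nonneg fun i _ => (hV i).1 _, ?_⟩
  rw [← Fintype.prod_sum]
  simp [(hV _).2]

lemma sub_pi {G f : ℝ → ℝ} (hf : ConvexOn ℝ (Set.Ici 0) f) (hf1 : f 1 = 0)
    (hG0 : G 0 = 0) (hGnonneg : ∀ x ∈ Set.Ici (0 : ℝ), 0 ≤ G x)
    (hsub : InfoSubadditive G f)
    {A Y : Type*} [Fintype A] [Fintype Y] (p : A → ℝ) (hp : IsPMF p) (n : ℕ)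
    (V : Fin n → A → Y → ℝ) (hV : ∀ i a, IsPMF (V i a)) :
    Igf G f p (fun a (yn : Fin n → Y) => ∏ i, V i a (yn i)) ≤ ∑ i, Igf G f p (V i) := by
  induction n with
  | zero =>
    refine csInf_le (Igf_bddBelow G f hf hf1 hGnonneg p hp _
      fun a => isPMF_pi 0 (fun i => V i a) (fun i => hV i a)) ?_
    refine ⟨fun _ => 1, ⟨fun _ => zero_le_one, by simp⟩, fun x y h => ?_, ?_⟩
    · simp at h
    · simp [fDiv, hf1, hG0]
  | succ n ih =>
    have h1 := sub_univ hsub p (V 0) (fun a (yn : Fin n → Y) => ∏ i, V i.succ a (yn i)) hp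
      (hV 0) (fun a => isPMF_pi n (fun i => V i.succ a) (fun i => hV _ a))
    have h2 := ih (fun i => V i.succ) (fun i a => hV _ a)
    rw [Fin.sum_univ_succ]
    refine le_trans (le_of_eq ?_) (h1.trans (by gcongr))
    rw [← Igf_equiv G f (Equiv.refl A) (Fin.consEquiv (fun _ : Fin (n+1) => Y))]
    congr 1
    ext a y
    simp [Fin.prod_univ_succ, Fin.consEquiv]

lemma total_one {A B M : Type*} [Fintype A] [Fintype B] [Fintype M] [Nonempty M]
    (Q : A → B → ℝ) (hQ : ∀ a, IsPMF (Q a))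
    (enc : M → A → ℝ) (henc : ∀ m, IsPMF (enc m))
    (dec : B → M → ℝ) (hdec : ∀ b, IsPMF (dec b)) :
    ∑ m : M, ∑ a : A, ∑ b : B, ∑ m' : M,
      1 / (Fintype.card M : ℝ) * enc m a * Q a b * dec b m' = 1 := by
  simp only [← Finset.mul_sum, (hdec _).2, mul_one, (hQ _).2, (henc _).2]
  simp

lemma correct_unif {A B M : Type*} [Fintype A] [Fintype B] [Fintype M] [DecidableEq M]
    (q : B → ℝ) (hq : IsPMF q) (N : ℝ)
    (enc : M → A → ℝ) (henc : ∀ m, IsPMF (enc m))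
    (dec : B → M → ℝ) (hdec : ∀ b, IsPMF (dec b)) :
    ∑ m : M, ∑ a : A, ∑ b : B, ∑ m' : M,
      (if m' = m then 1 / N * enc m a * q b * dec b m' else 0) = 1 / N := by
  have : ∀ m, ∑ a : A, ∑ b : B, ∑ m' : M,
      (if m' = m then 1 / N * enc m a * q b * dec b m' else 0)
      = 1 / N * ∑ b, q b * dec b m := by
    intro m
    simp only [Finset.sum_ite_eq', Finset.mem_univ, if_true, mul_assoc, ← Finset.mul_sum]
    rw [← Finset.sum_mul, (henc m).2, one_mul]
  simp only [this]
  rw [← Finset.mul_sum, Finset.sum_comm]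
  simp only [← Finset.mul_sum, (hdec _).2, mul_one, hq.2]

lemma decode_bound {A B M : Type*} [Fintype A] [Fintype B] [Fintype M] [DecidableEq M]
    (f : ℝ → ℝ) (hf : ConvexOn ℝ (Set.Ici 0) f) (hf1 : f 1 = 0)
    (hM : 2 ≤ Fintype.card M)
    (K : A → B → ℝ) (hK : ∀ a, IsPMF (K a)) (q : B → ℝ) (hq : IsPMF q)
    (hac : ∀ a, AbsCont (K a) q)
    (enc : M → A → ℝ) (henc : ∀ m, IsPMF (enc m))
    (dec : B → M → ℝ) (hdec : ∀ b, IsPMF (dec b)) (N ε : ℝ) (hN : N = Fintype.card M)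
    (hε : ε = ∑ m : M, ∑ a : A, ∑ b : B, ∑ m' : M,
      (if m' = m then 0 else (1 / N) * enc m a * K a b * dec b m')) :
    0 ≤ (1 / N) * f (N * (1 - ε)) + ((N - 1) / N) * f (N * ε / (N - 1)) ∧
    (1 / N) * f (N * (1 - ε)) + ((N - 1) / N) * f (N * ε / (N - 1)) ≤
      ∑ a, (∑ m, 1 / N * enc m a) * fDiv f (K a) q := by
  have hN2 : (2 : ℝ) ≤ N := by rw [hN]; exact_mod_cast hM
  have hN0 : 0 < N := by linarith
  have hN1 : 0 < N - 1 := by linarith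
  have : Nonempty M := Fintype.card_pos_iff.mp (by omega)
  have split : ∀ F : M → A → B → M → ℝ,
      (∑ m : M, ∑ a : A, ∑ b : B, ∑ m' : M, (if m' = m then F m a b m' else 0)) +
      (∑ m : M, ∑ a : A, ∑ b : B, ∑ m' : M, (if m' = m then 0 else F m a b m')) =
      ∑ m : M, ∑ a : A, ∑ b : B, ∑ m' : M, F m a b m' := by
    intro F
    simp only [← Finset.sum_add_distrib]
    refine Finset.sum_congr rfl fun m _ => Finset.sum_congr rfl fun a _ =>
      Finset.sum_congr rfl fun b _ => Finset.sum_congr rfl fun m' _ => ?_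
    split_ifs <;> simp
  have c1 := correct_unif q hq N enc henc dec hdec
  have t1 := total_one (fun _ : A => q) (fun _ => hq) enc henc dec hdec
  have t2 := total_one K hK enc henc dec hdec
  rw [← hN] at t1 t2
  have s1 := split (fun m a b m' => 1 / N * enc m a * q b * dec b m')
  have s2 := split (fun m a b m' => 1 / N * enc m a * K a b * dec b m')
  rw [t1, c1] at s1
  rw [t2, ← hε] at s2
  have hw : ∀ (m : M) a b m', 0 ≤ 1 / N * enc m a * q b * dec b m' := fun m a b m' =>
    mul_nonneg (mul_nonneg (mul_nonneg (by positivity) ((henc m).1 a)) (hq.1 b)) ((hdec b).1 m')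
  have hwK : ∀ (m : M) a b m', 0 ≤ 1 / N * enc m a * K a b * dec b m' := fun m a b m' =>
    mul_nonneg (mul_nonneg (mul_nonneg (by positivity) ((henc m).1 a)) ((hK a).1 b))
      ((hdec b).1 m')
  have hr : ∀ a b, 0 ≤ K a b / q b := fun a b => div_nonneg ((hK a).1 b) (hq.1 b)
  have hε0 : 0 ≤ ε := by
    rw [hε]
    refine Finset.sum_nonneg fun m _ => Finset.sum_nonneg fun a _ =>
      Finset.sum_nonneg fun b _ => Finset.sum_nonneg fun m' _ => ?_
    split_ifs
    · exact le_rfl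
    · exact hwK m a b m'
  have hε1 : 0 ≤ 1 - ε := by
    rw [← s2, add_sub_cancel_right]
    refine Finset.sum_nonneg fun m _ => Finset.sum_nonneg fun a _ =>
      Finset.sum_nonneg fun b _ => Finset.sum_nonneg fun m' _ => ?_
    split_ifs
    · exact hwK m a b m'
    · exact le_rfl
  constructor
  · have h := hf.2 (Set.mem_Ici.2 (by positivity : 0 ≤ N * (1 - ε)))
      (Set.mem_Ici.2 (by positivity : 0 ≤ N * ε / (N - 1))) (by positivity : 0 ≤ 1 / N)
      (by positivity : 0 ≤ (N - 1) / N) (by field_simp; ring)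
    simp only [smul_eq_mul] at h
    have e : 1 / N * (N * (1 - ε)) + (N - 1) / N * (N * ε / (N - 1)) = 1 := by
      field_simp; ring
    rwa [e, hf1] at h
  · have j1 := jensen_scaled f hf
      (fun i : M × A × B × M => if i.2.2.2 = i.1 then
        1 / N * enc i.1 i.2.1 * q i.2.2.1 * dec i.2.2.1 i.2.2.2 else 0)
      (fun i => K i.2.1 i.2.2.1 / q i.2.2.1)
      (fun i => by split_ifs; exacts [hw _ _ _ _, le_rfl]) (fun i => hr _ _)
      (1 / N) (by positivity) (by simpa only [Fintype.sum_prod_type] using c1)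
    have j2 := jensen_scaled f hf
      (fun i : M × A × B × M => if i.2.2.2 = i.1 then 0 else
        1 / N * enc i.1 i.2.1 * q i.2.2.1 * dec i.2.2.1 i.2.2.2)
      (fun i => K i.2.1 i.2.2.1 / q i.2.2.1)
      (fun i => by split_ifs; exacts [le_rfl, hw _ _ _ _]) (fun i => hr _ _)
      ((N - 1) / N) (by positivity) (by
        simp only [Fintype.sum_prod_type]
        have : (N - 1) / N = 1 - 1 / N := by field_simp
        rw [this]; linarith)
    have hmul : ∀ (m : M) a b m', 1 / N * enc m a * q b * dec b m' * (K a b / q b) =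
        1 / N * enc m a * K a b * dec b m' := fun m a b m' => by
      conv_rhs => rw [← mul_div_of_absCont (hac a) b]
      ring
    simp only [Fintype.sum_prod_type, ite_mul, zero_mul, hmul] at j1 j2
    rw [← hε] at j2
    have s3 := split (fun m a b m' => 1 / N * enc m a * q b * dec b m' * f (K a b / q b))
    have e1 : ∑ m : M, ∑ a : A, ∑ b : B, ∑ m' : M,
        (if m' = m then 1 / N * enc m a * K a b * dec b m' else 0) = 1 - ε := by linarith
    rw [e1] at j1
    have e2 : (1 - ε) / (1 / N) = N * (1 - ε) := by field_simp
    have e3 : ε / ((N - 1) / N) = N * ε / (N - 1) := by field_simp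
    rw [e2] at j1
    rw [e3] at j2
    have e4 : ∑ m : M, ∑ a : A, ∑ b : B, ∑ m' : M,
        1 / N * enc m a * q b * dec b m' * f (K a b / q b) =
        ∑ a, (∑ m, 1 / N * enc m a) * fDiv f (K a) q := by
      rw [Finset.sum_comm]
      refine Finset.sum_congr rfl fun a _ => ?_
      rw [Finset.sum_mul]
      refine Finset.sum_congr rfl fun m _ => ?_
      rw [fDiv_eq_sum f _ q hq, Finset.mul_sum]
      refine Finset.sum_congr rfl fun b _ => ?_
      rw [← Finset.sum_mul, ← Finset.mul_sum, (hdec b).2]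
      ring
    linarith

/-- Finite-blocklength converse: for a uniform message sent over `n` uses of the
memoryless channel `W` with error probability `ε`, if `(G,f)` is information-subadditive
with `G` increasing and convex, then
`n · sup_{p_X} I_{G,f}(p_X, W) ≥ G((1/|𝓜|) f(|𝓜|(1−ε)) + ((|𝓜|−1)/|𝓜|) f(|𝓜|ε/(|𝓜|−1)))`. -/
theorem finite_blocklength_converse
    {X Y M : Type*} [Fintype X] [Fintype Y] [Fintype M] [DecidableEq M]
    (G f : ℝ → ℝ)
    (hf : ConvexOn ℝ (Set.Ici 0) f) (hf1 : f 1 = 0)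
    (hGmono : StrictMonoOn G (Set.Ici 0)) (hGconv : ConvexOn ℝ (Set.Ici 0) G)
    (hG0 : G 0 = 0) (hGnonneg : ∀ x ∈ Set.Ici (0 : ℝ), 0 ≤ G x)
    (hsub : InfoSubadditive G f)
    (W : X → Y → ℝ) (hW : ∀ x, IsPMF (W x))
    (n : ℕ) (hn : 1 ≤ n) (hM : 2 ≤ Fintype.card M)
    (pEnc : M → (Fin n → X) → ℝ) (hEnc : ∀ m, IsPMF (pEnc m))
    (pDec : (Fin n → Y) → M → ℝ) (hDec : ∀ yn, IsPMF (pDec yn)) :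
    let N : ℝ := Fintype.card M
    let ε : ℝ := ∑ m : M, ∑ xn : Fin n → X, ∑ yn : Fin n → Y, ∑ m' : M,
      (if m' = m then 0 else (1 / N) * pEnc m xn * (∏ i, W (xn i) (yn i)) * pDec yn m')
    (n : ℝ) * sSup {v : ℝ | ∃ pX : X → ℝ, IsPMF pX ∧ v = Igf G f pX W} ≥
      G ((1 / N) * f (N * (1 - ε)) + ((N - 1) / N) * f (N * ε / (N - 1))) := by
  classical
  intro N ε
  have hN0 : 0 < N := by
    have : (2 : ℝ) ≤ (Fintype.card M : ℝ) := by exact_mod_cast hM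
    change (0 : ℝ) < (Fintype.card M : ℝ)
    linarith
  have : Nonempty M := Fintype.card_pos_iff.mp (by omega)
  obtain ⟨xn₀⟩ := (hEnc (Classical.arbitrary M)).nonempty'
  have : Nonempty Y := (hW (xn₀ ⟨0, hn⟩)).nonempty'
  let K : (Fin n → X) → (Fin n → Y) → ℝ := fun xn yn => ∏ i, W (xn i) (yn i)
  have hK : ∀ xn, IsPMF (K xn) := fun xn => isPMF_pi n (fun i => W (xn i)) fun i => hW _
  let p : (Fin n → X) → ℝ := fun xn => ∑ m, 1 / N * pEnc m xn
  have hp : IsPMF p := by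
    refine ⟨fun xn => Finset.sum_nonneg fun m _ =>
      mul_nonneg (by positivity) ((hEnc m).1 _), ?_⟩
    simp only [p]
    rw [Finset.sum_comm]
    simp only [← Finset.mul_sum, (hEnc _).2]
    simp only [Finset.sum_const, Finset.card_univ, nsmul_eq_mul, mul_one]
    change 1 / N * N = 1
    field_simp
  -- lower bound on the block information
  have hlow : G ((1 / N) * f (N * (1 - ε)) + ((N - 1) / N) * f (N * ε / (N - 1))) ≤
      Igf G f p K := by
    obtain ⟨q₀, hq₀, hac₀⟩ := exists_unif (Y := Fin n → Y)
    refine le_csInf ⟨_, q₀, hq₀, fun x => hac₀ _, rfl⟩ ?_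
    rintro v ⟨q, hq, hac, rfl⟩
    obtain ⟨h0, h1⟩ := decode_bound f hf hf1 hM K hK q hq hac pEnc hEnc pDec hDec N ε rfl rfl
    have hD : ∀ xn, 0 ≤ fDiv f (K xn) q := fun xn =>
      fDiv_nonneg f hf hf1 _ _ (hK xn) hq (hac xn)
    have hJ := jensen_scaled G hGconv p (fun xn => fDiv f (K xn) q) hp.1 hD 1 one_pos hp.2
    rw [one_mul, div_one] at hJ
    exact (hGmono.monotoneOn (Set.mem_Ici.2 h0) (Set.mem_Ici.2 (h0.trans h1)) h1).trans hJ
  have hup := sub_pi hf hf1 hG0 hGnonneg hsub p hp n (fun i xn => W (xn i))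
    (fun i xn => hW _)
  -- single-letter bound
  have hbdd : BddAbove {v : ℝ | ∃ pX : X → ℝ, IsPMF pX ∧ v = Igf G f pX W} := by
    obtain ⟨q₀, hq₀, hac₀⟩ := exists_unif (Y := Y)
    refine ⟨∑ x, G (fDiv f (W x) q₀), ?_⟩
    rintro v ⟨pX, hpX, rfl⟩
    refine (csInf_le (Igf_bddBelow G f hf hf1 hGnonneg pX hpX W hW)
      ⟨q₀, hq₀, fun x => hac₀ _, rfl⟩).trans ?_
    refine Finset.sum_le_sum fun x _ => ?_
    have hx1 : pX x ≤ 1 := by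
      rw [← hpX.2]; exact Finset.single_le_sum (fun i _ => hpX.1 i) (Finset.mem_univ x)
    exact mul_le_of_le_one_left
      (hGnonneg _ (fDiv_nonneg f hf hf1 _ _ (hW x) hq₀ (hac₀ _))) hx1
  have hsingle : ∀ i : Fin n, Igf G f p (fun xn => W (xn i)) ≤
      sSup {v : ℝ | ∃ pX : X → ℝ, IsPMF pX ∧ v = Igf G f pX W} := by
    intro i
    let pi : X → ℝ := fun x => ∑ xn, if xn i = x then p xn else 0
    have hpi : IsPMF pi := by
      refine ⟨fun x => Finset.sum_nonneg fun xn _ => ?_, ?_⟩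
      · split_ifs
        · exact hp.1 _
        · exact le_rfl
      · simp only [pi]
        rw [Finset.sum_comm]
        simpa using hp.2
    refine le_trans ?_ (le_csSup hbdd ⟨pi, hpi, rfl⟩)
    obtain ⟨q₀, hq₀, hac₀⟩ := exists_unif (Y := Y)
    refine le_csInf ⟨_, q₀, hq₀, fun x => hac₀ _, rfl⟩ ?_
    rintro v ⟨q, hq, hac, rfl⟩
    refine csInf_le (Igf_bddBelow G f hf hf1 hGnonneg p hp _ fun xn => hW _)
      ⟨q, hq, fun xn => hac _, ?_⟩
    simp only [pi, Finset.sum_mul]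
    rw [Finset.sum_comm]
    refine Finset.sum_congr rfl fun xn _ => ?_
    simp
  have hfin : ∑ i : Fin n, Igf G f p (fun xn => W (xn i)) ≤
      (n : ℝ) * sSup {v : ℝ | ∃ pX : X → ℝ, IsPMF pX ∧ v = Igf G f pX W} := by
    refine (Finset.sum_le_sum fun i _ => hsingle i).trans (le_of_eq ?_)
    simp
  exact hlow.trans (hup.trans hfin)
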